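/- arXiv:2406.06106 — 3 statements merged into one kernel-verified Lean document; each statement's English description precedes it below -/
import Mathlib

section
/- Let N ≥ 1 and let ν_N be the pushforward of the standard Gaussian measure γ_N on ℝ^N under the map g ↦ (g_j − (1/N)·Σ_{j'=1}^N g_{j'})_{j=1}^N. Define T : ℝ^n × (ℝ^N)^n → ℝ^{n×N} by T(y, z)_{(i,j)} = y_i/√N + (z_i)_j. Then the pushforward of the product measure γₙ ⊗ ν_N^{⊗n} under T equals the standard Gaussian measure on ℝ^{n×N}. -/
open MeasureTheory ProbabilityTheory

/-- The standard Gaussian measure on `ι → ℝ` (product of `N(0,1)`). -/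
noncomputable def stdGaussianPi (ι : Type) [Fintype ι] : Measure (ι → ℝ) :=
  Measure.pi fun _ => gaussianReal 0 1

/-- The centered Gaussian measure on `ℝ^N` with variances `1 - 1/N` and pairwise
covariances `-1/N`, realized as the pushforward of the standard Gaussian under
`g ↦ g - (mean of g) · (1,…,1)`. -/
noncomputable def nuN (N : ℕ) : Measure (Fin N → ℝ) :=
  Measure.map (fun g : Fin N → ℝ => fun j => g j - (1 / (N : ℝ)) * ∑ j', g j')
    (stdGaussianPi (Fin N))

/-!
Write `ℝ^N = ℝu ⊕ u^⊥` with the unit vector `u = (1, …, 1)/√N`. A standard Gaussian vector is the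
sum of its components along `u` and along `u^⊥`, which are independent: the first is `s • u` with
`s` standard normal, the second has law `ν_N`. On characteristic functions, evaluated at the linear
form with coefficients `t`, this is the identity `‖t‖² = (t ⬝ u)² + ‖t - (t ⬝ u) u‖²`.
The map `T` performs this recomposition independently in each of the `n` rows.
-/

open Complex (exp)

section Pythagoras

variable {κ R : Type*} [Fintype κ] [CommRing R]

lemma sq_dotProduct_add_sum_sq_sub_of_dotProduct_self_eq_one {u : κ → R} (hu : u ⬝ᵥ u = 1)
    (t : κ → R) :
    (t ⬝ᵥ u) ^ 2 + ∑ k, (t k - u k * (t ⬝ᵥ u)) ^ 2 = ∑ k, t k ^ 2 := by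
  set a := t ⬝ᵥ u with ha
  have expand (k : κ) :
      (t k - u k * a) ^ 2 = t k ^ 2 - 2 * a * (t k * u k) + a ^ 2 * (u k * u k) := by ring
  simp only [dotProduct] at hu ha
  simp only [expand, Finset.sum_add_distrib, Finset.sum_sub_distrib, ← Finset.mul_sum, hu, ← ha]
  ring

end Pythagoras

section CharFunDual

lemma charFunDual_gaussianReal (m : ℝ) (v : NNReal) (L : StrongDual ℝ ℝ) :
    charFunDual (gaussianReal m v) L = exp (L 1 * m * Complex.I - v * (L 1 : ℂ) ^ 2 / 2) := by
  rw [← charFun_gaussianReal, charFun_eq_charFunDual_toDualMap]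
  congr 1
  ext
  simp

instance isProbabilityMeasure_stdGaussianPi (ι : Type) [Fintype ι] :
    IsProbabilityMeasure (stdGaussianPi ι) := by
  unfold stdGaussianPi
  infer_instance

lemma charFunDual_stdGaussianPi {ι : Type} [Fintype ι] [DecidableEq ι]
    (L : StrongDual ℝ (ι → ℝ)) :
    charFunDual (stdGaussianPi ι) L = exp (-((∑ i, L (Pi.single i 1) ^ 2 : ℝ) : ℂ) / 2) := by
  rw [stdGaussianPi, charFunDual_pi]
  simp [charFunDual_gaussianReal, ← Complex.exp_sum, neg_div, Finset.sum_div]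

end CharFunDual

section OrthogonalComponent

variable {κ : Type} [Fintype κ]

/-- The map `g ↦ g - (u ⬝ᵥ g) • u` on `ℝ^κ`. For a unit vector `u` it is the orthogonal projection
onto the hyperplane `u^⊥`; it is stated in coordinates because the norm of `κ → ℝ` is not
Euclidean. -/
noncomputable def orthogonalComponent (u : κ → ℝ) : (κ → ℝ) →L[ℝ] (κ → ℝ) :=
  .id ℝ _ - (∑ k, u k • ContinuousLinearMap.proj k : StrongDual ℝ (κ → ℝ)).smulRight u

lemma orthogonalComponent_apply (u g : κ → ℝ) :
    orthogonalComponent u g = g - (u ⬝ᵥ g) • u := by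
  simp [orthogonalComponent, dotProduct]

/-- The law of `g - (u ⬝ᵥ g) • u` for a standard Gaussian vector `g`. For a unit vector `u` it is
the standard Gaussian measure of the hyperplane `u^⊥`, seen as a degenerate measure on `ℝ^κ`. -/
noncomputable def orthogonalGaussian (u : κ → ℝ) : Measure (κ → ℝ) :=
  (stdGaussianPi κ).map (orthogonalComponent u)

instance isProbabilityMeasure_orthogonalGaussian (u : κ → ℝ) :
    IsProbabilityMeasure (orthogonalGaussian u) :=
  Measure.isProbabilityMeasure_map (by fun_prop)

lemma charFunDual_orthogonalGaussian [DecidableEq κ] (u : κ → ℝ) (L : StrongDual ℝ (κ → ℝ)) :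
    charFunDual (orthogonalGaussian u) L =
      exp (-((∑ k, (L (Pi.single k 1) - u k * L u) ^ 2 : ℝ) : ℂ) / 2) := by
  rw [orthogonalGaussian, charFunDual_map, charFunDual_stdGaussianPi]
  simp only [ContinuousLinearMap.comp_apply, orthogonalComponent_apply, dotProduct_single_one,
    map_sub, map_smul, smul_eq_mul]

theorem measurePreserving_smul_add_orthogonalGaussian {u : κ → ℝ} (hu : u ⬝ᵥ u = 1) :
    MeasurePreserving (fun p : ℝ × (κ → ℝ) ↦ p.1 • u + p.2)
      ((gaussianReal 0 1).prod (orthogonalGaussian u)) (stdGaussianPi κ) := by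
  classical
  refine ⟨by fun_prop, Measure.ext_of_charFunDual (funext fun L ↦ ?_)⟩
  let recompose : ℝ × (κ → ℝ) →L[ℝ] (κ → ℝ) :=
    (ContinuousLinearMap.fst ℝ ℝ (κ → ℝ)).smulRight u + .snd ℝ ℝ (κ → ℝ)
  let t : κ → ℝ := fun k ↦ L (Pi.single k 1)
  have apply_eq_dotProduct : L u = t ⬝ᵥ u := by
    conv_lhs => rw [pi_eq_sum_univ' u]
    simp [t, dotProduct, mul_comm]
  have charFunDual_line :
      charFunDual (gaussianReal 0 1) ((L.comp recompose).comp (.inl ℝ ℝ (κ → ℝ))) =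
        exp (-((L u ^ 2 : ℝ) : ℂ) / 2) := by
    simp [charFunDual_gaussianReal, recompose, neg_div]
  have comp_inr : (L.comp recompose).comp (.inr ℝ ℝ (κ → ℝ)) = L := by
    ext
    simp [recompose]
  change charFunDual (Measure.map recompose _) L = _
  rw [charFunDual_map, charFunDual_prod, charFunDual_line, comp_inr,
    charFunDual_orthogonalGaussian, charFunDual_stdGaussianPi, ← Complex.exp_add, ← add_div,
    ← neg_add, ← Complex.ofReal_add, apply_eq_dotProduct,
    sq_dotProduct_add_sum_sq_sub_of_dotProduct_self_eq_one hu t]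

end OrthogonalComponent

section Rows

lemma measurePreserving_uncurry_stdGaussianPi (ι κ : Type) [Fintype ι] [Fintype κ] :
    MeasurePreserving Function.uncurry (Measure.pi fun _ : ι ↦ stdGaussianPi κ)
      (stdGaussianPi (ι × κ)) := by
  refine ⟨(MeasurableEquiv.curry ι κ ℝ).symm.measurable, ?_⟩
  simpa only [stdGaussianPi, Measure.infinitePi_eq_pi, MeasurableEquiv.coe_curry_symm] using
    Measure.infinitePi_map_curry_symm fun (_ : ι) (_ : κ) ↦ gaussianReal 0 1

theorem lift_of_gaussian_is_gaussian_general {ι κ : Type} [Fintype ι] [Fintype κ] {u : κ → ℝ}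
    (hu : u ⬝ᵥ u = 1) :
    Measure.map
      (fun (q : (ι → ℝ) × (ι → κ → ℝ)) (ij : ι × κ) ↦ q.1 ij.1 * u ij.2 + q.2 ij.1 ij.2)
      ((stdGaussianPi ι).prod (Measure.pi fun _ : ι ↦ orthogonalGaussian u)) =
      stdGaussianPi (ι × κ) := by
  have pair_rows := (measurePreserving_arrowProdEquivProdArrow ℝ (κ → ℝ) ι
    (fun _ ↦ gaussianReal 0 1) (fun _ ↦ orthogonalGaussian u)).symm
  have recompose_rows := measurePreserving_pi
    (fun _ : ι ↦ (gaussianReal 0 1).prod (orthogonalGaussian u)) (fun _ ↦ stdGaussianPi κ)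
    fun _ ↦ measurePreserving_smul_add_orthogonalGaussian hu
  exact ((measurePreserving_uncurry_stdGaussianPi ι κ).comp
    (recompose_rows.comp pair_rows)).map_eq

end Rows

section Centering

lemma dotProduct_self_inv_sqrt_card {κ : Type*} [Fintype κ] [Nonempty κ] :
    (fun _ : κ ↦ (√(Fintype.card κ))⁻¹) ⬝ᵥ (fun _ ↦ (√(Fintype.card κ))⁻¹) = 1 := by
  simp [dotProduct, ← mul_inv]

lemma nuN_eq_orthogonalGaussian (N : ℕ) : nuN N = orthogonalGaussian fun _ ↦ (√N)⁻¹ := by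
  have centering_eq (g : Fin N → ℝ) (j : Fin N) :
      g j - 1 / (N : ℝ) * ∑ j', g j' = orthogonalComponent (fun _ ↦ (√N)⁻¹) g j := by
    have inv_sqrt_mul_self : (√N)⁻¹ * (√N)⁻¹ = 1 / (N : ℝ) := by simp [← mul_inv]
    simp only [orthogonalComponent_apply, dotProduct, Pi.sub_apply, Pi.smul_apply, smul_eq_mul,
      ← Finset.mul_sum, ← inv_sqrt_mul_self]
    ring
  simp only [nuN, orthogonalGaussian, centering_eq]

end Centering

theorem lift_of_gaussian_is_gaussian (n N : ℕ) (hn : 1 ≤ n) (hN : 1 ≤ N) :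
    Measure.map
      (fun q : (Fin n → ℝ) × (Fin n → Fin N → ℝ) =>
        fun ij : Fin n × Fin N => q.1 ij.1 / Real.sqrt N + q.2 ij.1 ij.2)
      ((stdGaussianPi (Fin n)).prod (Measure.pi fun _ : Fin n => nuN N)) =
      stdGaussianPi (Fin n × Fin N) := by
  have : NeZero N := ⟨Nat.one_le_iff_ne_zero.mp hN⟩
  simpa only [nuN_eq_orthogonalGaussian, Fintype.card_fin, div_eq_mul_inv] using
    lift_of_gaussian_is_gaussian_general (ι := Fin n) (dotProduct_self_inv_sqrt_card (κ := Fin N))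
end

section
/- Let d ≥ 1, N ≥ 1, δ' ∈ (0,1), and η̂ ≥ 0 with η̂ ≤ ((δ'^{2d+3})/d − 2/N)/3. Let μ be a probability measure on ℝ^N that approximately matches the moments of the standard Gaussian up to degree 4 with slack η̂. Then μ({x ∈ ℝ^N : |(1/N)·Σ_{j=1}^N x_j² − 1| > δ'^{d+1}}) ≤ δ'/d. -/
open MeasureTheory ProbabilityTheory

/-- `μ` approximately matches the moments of the standard Gaussian up to degree `k`
with slack `η`. -/
def MomentMatches {ι : Type} [Fintype ι] (k : ℕ) (η : ℝ)
    (μ : Measure (ι → ℝ)) : Prop :=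
  ∀ α : ι → ℕ, (∑ i, α i) ≤ k →
    Integrable (fun x => ∏ i, |x i| ^ α i) μ ∧
    |(∫ x, ∏ i, (x i) ^ α i ∂μ) - ∫ y, ∏ i, (y i) ^ α i ∂(stdGaussianPi ι)| ≤ η

/-!
Write `W j = x j ^ 2 - 1`. Under the Gaussian, `𝔼[W i * W j]` is `2` on the diagonal and `0` off it.
Expanding the product into monomials of degree at most four, the constant one being exact, shows
that matching the moments costs at most three slacks, so the second moment of the average of the
`W j` is at most `3 η + 2 / N`. Chebyshev's inequality turns this into the tail bound.
-/

section GaussianMoments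

theorem iteratedDeriv_succ_id_mul {𝕜 : Type*} [NontriviallyNormedField 𝕜] {f : 𝕜 → 𝕜} {n : ℕ}
    {t : 𝕜} (hf : ContDiffAt 𝕜 (n + 1 : ℕ) f t) :
    iteratedDeriv (n + 1) (fun s => s * f s) t =
      (n + 1) * iteratedDeriv n f t + t * iteratedDeriv (n + 1) f t := by
  have higher_derivs_vanish (i : ℕ) : iteratedDeriv (i + 1 + 1) (fun s : 𝕜 => s) t = 0 := by
    simp [iteratedDeriv_succ', iteratedDeriv_const]
  rw [iteratedDeriv_fun_mul contDiffAt_fun_id hf, Finset.sum_range_succ', Finset.sum_range_succ']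
  simp [higher_derivs_vanish]

-- The moment generating function `M` of `N(0, v)` solves `M' t = v * (t * M t)`; differentiate
-- this `n + 1` times at `0`.
theorem integral_pow_add_two_gaussianReal (v : NNReal) (n : ℕ) :
    ∫ x, x ^ (n + 2) ∂gaussianReal 0 v = (n + 1) * v * ∫ x, x ^ n ∂gaussianReal 0 v := by
  set M : ℝ → ℝ := fun t => Real.exp (v * t ^ 2 / 2) with hM
  have moment_eq (m : ℕ) : ∫ x, x ^ m ∂gaussianReal 0 v = iteratedDeriv m M 0 := by
    have h := iteratedDeriv_mgf_zero (X := fun x : ℝ => x) (μ := gaussianReal 0 v) (by simp) m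
    simpa [mgf_fun_id_gaussianReal, hM] using h.symm
  have deriv_M : deriv M = fun t => v * (t * M t) := by
    funext t
    have h := (((hasDerivAt_pow 2 t).const_mul (v : ℝ)).div_const 2).exp
    exact (h.congr_deriv (by norm_num [hM]; ring)).deriv
  have contDiff_M : ContDiff ℝ (n + 1 : ℕ) M := by fun_prop
  rw [moment_eq, moment_eq, iteratedDeriv_succ', deriv_M, iteratedDeriv_const_mul_field,
    iteratedDeriv_succ_id_mul contDiff_M.contDiffAt]
  ring

theorem integral_sq_gaussianReal (v : NNReal) : ∫ x, x ^ 2 ∂gaussianReal 0 v = v := by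
  simpa using integral_pow_add_two_gaussianReal v 0

theorem integral_pow_four_gaussianReal (v : NNReal) :
    ∫ x, x ^ 4 ∂gaussianReal 0 v = 3 * v ^ 2 := by
  rw [integral_pow_add_two_gaussianReal v 2, integral_sq_gaussianReal]
  push_cast
  ring

variable {ι : Type} [Fintype ι]

theorem integral_pow_stdGaussianPi (i : ι) (n : ℕ) :
    ∫ y, y i ^ n ∂stdGaussianPi ι = ∫ t, t ^ n ∂gaussianReal 0 1 :=
  integral_comp_eval (μ := fun _ : ι => gaussianReal 0 1) (f := fun t => t ^ n)
    (measurable_id.pow_const n).aestronglyMeasurable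

theorem integral_pow_mul_pow_stdGaussianPi {i j : ι} (hij : i ≠ j) (m n : ℕ) :
    ∫ y, y i ^ m * y j ^ n ∂stdGaussianPi ι =
      (∫ t, t ^ m ∂gaussianReal 0 1) * ∫ t, t ^ n ∂gaussianReal 0 1 := by
  have indep : IndepFun (fun y : ι → ℝ => y i) (fun y => y j) (stdGaussianPi ι) :=
    (iIndepFun_pi (X := fun _ t => t) fun _ => aemeasurable_id).indepFun hij
  have indep_pow : IndepFun (fun y : ι → ℝ => y i ^ m) (fun y => y j ^ n) (stdGaussianPi ι) :=
    indep.comp (measurable_id.pow_const m) (measurable_id.pow_const n)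
  rw [indep_pow.integral_fun_mul_eq_mul_integral
      ((measurable_pi_apply i).pow_const m).aestronglyMeasurable
      ((measurable_pi_apply j).pow_const n).aestronglyMeasurable,
    integral_pow_stdGaussianPi, integral_pow_stdGaussianPi]

theorem integral_sq_mul_sq_stdGaussianPi [DecidableEq ι] (i j : ι) :
    ∫ y, y i ^ 2 * y j ^ 2 ∂stdGaussianPi ι = 1 + if i = j then 2 else 0 := by
  split_ifs with hij
  · subst hij
    simp only [← pow_add, integral_pow_stdGaussianPi, integral_pow_four_gaussianReal]
    norm_num
  · simp [integral_pow_mul_pow_stdGaussianPi hij, integral_sq_gaussianReal]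

end GaussianMoments

theorem prod_pow_single_add_single {ι R : Type*} [Fintype ι] [DecidableEq ι] [CommMonoid R]
    (x : ι → R) (i j : ι) (m n : ℕ) :
    ∏ l, x l ^ (Pi.single i m + Pi.single j n : ι → ℕ) l = x i ^ m * x j ^ n := by
  simp only [Pi.add_apply, pow_add, Finset.prod_mul_distrib]
  simp [Pi.single_apply, pow_ite]

namespace MomentMatches

variable {ι : Type} [Fintype ι] {k : ℕ} {η : ℝ} {μ : Measure (ι → ℝ)}

theorem integrable_prod_pow (hμ : MomentMatches k η μ) {α : ι → ℕ} (hα : ∑ i, α i ≤ k) :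
    Integrable (fun x => ∏ i, x i ^ α i) μ := by
  have measurable_prod_pow : Measurable fun x : ι → ℝ => ∏ i, x i ^ α i :=
    Finset.measurable_prod _ fun i _ => (measurable_pi_apply i).pow_const (α i)
  refine (integrable_norm_iff measurable_prod_pow.aestronglyMeasurable).1 ?_
  simpa [Finset.abs_prod] using (hμ α hα).1

theorem integrable_pow_mul_pow (hμ : MomentMatches k η μ) {m n : ℕ} (hmn : m + n ≤ k) (i j : ι) :
    Integrable (fun x => x i ^ m * x j ^ n) μ := by
  classical
  have h := hμ.integrable_prod_pow (α := Pi.single i m + Pi.single j n)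
    (by simpa [Finset.sum_add_distrib] using hmn)
  simpa only [prod_pow_single_add_single] using h

theorem abs_integral_pow_mul_pow_sub_le (hμ : MomentMatches k η μ) {m n : ℕ} (hmn : m + n ≤ k)
    (i j : ι) :
    |∫ x, x i ^ m * x j ^ n ∂μ - ∫ y, y i ^ m * y j ^ n ∂stdGaussianPi ι| ≤ η := by
  classical
  have h := (hμ (Pi.single i m + Pi.single j n)
    (by simpa [Finset.sum_add_distrib] using hmn)).2
  simpa only [prod_pow_single_add_single] using h

theorem integrable_pow (hμ : MomentMatches k η μ) {n : ℕ} (hn : n ≤ k) (i : ι) :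
    Integrable (fun x => x i ^ n) μ := by
  simpa using hμ.integrable_pow_mul_pow (m := n) (n := 0) hn i i

theorem one_sub_le_integral_sq (hμ : MomentMatches k η μ) (hk : 2 ≤ k) (i : ι) :
    1 - η ≤ ∫ x, x i ^ 2 ∂μ := by
  have h := hμ.abs_integral_pow_mul_pow_sub_le (m := 2) (n := 0) hk i i
  simp only [pow_zero, mul_one, integral_pow_stdGaussianPi, integral_sq_gaussianReal,
    NNReal.coe_one] at h
  linarith [(abs_le.1 h).1]

theorem integral_sq_mul_sq_le [DecidableEq ι] (hμ : MomentMatches k η μ) (hk : 4 ≤ k) (i j : ι) :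
    ∫ x, x i ^ 2 * x j ^ 2 ∂μ ≤ 1 + (if i = j then 2 else 0) + η := by
  have h := hμ.abs_integral_pow_mul_pow_sub_le (m := 2) (n := 2) hk i j
  rw [integral_sq_mul_sq_stdGaussianPi] at h
  linarith [(abs_le.1 h).2]

theorem integrable_sq_sub_one_mul_sq_sub_one [IsFiniteMeasure μ] (hμ : MomentMatches k η μ)
    (hk : 4 ≤ k) (i j : ι) : Integrable (fun x => (x i ^ 2 - 1) * (x j ^ 2 - 1)) μ := by
  have h := (((hμ.integrable_pow_mul_pow (m := 2) (n := 2) hk i j).sub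
    (hμ.integrable_pow (n := 2) (by lia) i)).sub
    (hμ.integrable_pow (n := 2) (by lia) j)).add (integrable_const 1)
  refine h.congr (ae_of_all _ fun x => ?_)
  simp only [Pi.add_apply, Pi.sub_apply]
  ring

theorem integral_sq_sub_one_mul_sq_sub_one_le [DecidableEq ι] [IsProbabilityMeasure μ]
    (hμ : MomentMatches k η μ) (hk : 4 ≤ k) (i j : ι) :
    ∫ x, (x i ^ 2 - 1) * (x j ^ 2 - 1) ∂μ ≤ 3 * η + if i = j then 2 else 0 := by
  have hij := hμ.integrable_pow_mul_pow (m := 2) (n := 2) hk i j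
  have hi := hμ.integrable_pow (n := 2) (by lia) i
  have hj := hμ.integrable_pow (n := 2) (by lia) j
  calc ∫ x, (x i ^ 2 - 1) * (x j ^ 2 - 1) ∂μ
      = ∫ x, x i ^ 2 * x j ^ 2 - x i ^ 2 - x j ^ 2 + 1 ∂μ := by congr with x; ring
    _ = ∫ x, x i ^ 2 * x j ^ 2 ∂μ - ∫ x, x i ^ 2 ∂μ - ∫ x, x j ^ 2 ∂μ + 1 := by
      rw [integral_add (by fun_prop) (by fun_prop), integral_sub (by fun_prop) hj,
        integral_sub hij hi]
      simp
    _ ≤ 3 * η + if i = j then 2 else 0 := by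
      linarith [hμ.integral_sq_mul_sq_le hk i j, hμ.one_sub_le_integral_sq (by lia) i,
        hμ.one_sub_le_integral_sq (by lia) j]

end MomentMatches

section SecondMoment

variable {Ω : Type*} [MeasurableSpace Ω] {μ : Measure Ω}

theorem measure_lt_abs_le_integral_sq_div {f : Ω → ℝ} (hf : Integrable (fun ω => f ω ^ 2) μ)
    {ε : ℝ} (hε : 0 < ε) :
    μ {ω | ε < |f ω|} ≤ ENNReal.ofReal ((∫ ω, f ω ^ 2 ∂μ) / ε ^ 2) := by
  have hε2 : 0 < ε ^ 2 := by positivity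
  calc μ {ω | ε < |f ω|}
      ≤ μ {ω | ENNReal.ofReal (ε ^ 2) ≤ ENNReal.ofReal (f ω ^ 2)} :=
        measure_mono fun ω hω =>
          ENNReal.ofReal_le_ofReal (sq_le_sq.2 ((abs_of_pos hε).trans_le hω.le))
    _ ≤ (∫⁻ ω, ENNReal.ofReal (f ω ^ 2) ∂μ) / ENNReal.ofReal (ε ^ 2) :=
        meas_ge_le_lintegral_div hf.aemeasurable.ennreal_ofReal (by simpa using hε.ne') (by simp)
    _ = ENNReal.ofReal ((∫ ω, f ω ^ 2 ∂μ) / ε ^ 2) := by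
        rw [ENNReal.ofReal_div_of_pos hε2,
          ofReal_integral_eq_lintegral_ofReal hf (ae_of_all _ fun ω => sq_nonneg (f ω))]

variable {ι : Type*} [Fintype ι] {W : ι → Ω → ℝ}

theorem sq_average_eq_sum_mul {K : Type*} [Field K] (w : ι → K) :
    (1 / (Fintype.card ι : K) * ∑ i, w i) ^ 2 =
      1 / (Fintype.card ι : K) ^ 2 * ∑ i, ∑ j, w i * w j := by
  rw [← Finset.sum_mul_sum]
  ring

theorem integrable_sq_average (hW : ∀ i j, Integrable (fun ω => W i ω * W j ω) μ) :
    Integrable (fun ω => (1 / (Fintype.card ι : ℝ) * ∑ i, W i ω) ^ 2) μ := by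
  simp only [sq_average_eq_sum_mul]
  exact (integrable_finsetSum _ fun i _ => integrable_finsetSum _ fun j _ => hW i j).const_mul _

theorem integral_sq_average_le [Nonempty ι] [DecidableEq ι]
    (hW : ∀ i j, Integrable (fun ω => W i ω * W j ω) μ) {a b : ℝ}
    (hab : ∀ i j, ∫ ω, W i ω * W j ω ∂μ ≤ a + if i = j then b else 0) :
    ∫ ω, (1 / (Fintype.card ι : ℝ) * ∑ i, W i ω) ^ 2 ∂μ ≤ a + b / Fintype.card ι := by
  calc ∫ ω, (1 / (Fintype.card ι : ℝ) * ∑ i, W i ω) ^ 2 ∂μ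
      = 1 / (Fintype.card ι : ℝ) ^ 2 * ∑ i, ∑ j, ∫ ω, W i ω * W j ω ∂μ := by
        simp only [sq_average_eq_sum_mul]
        rw [integral_const_mul,
          integral_finsetSum _ fun i _ => integrable_finsetSum _ fun j _ => hW i j]
        simp only [integral_finsetSum _ fun j _ => hW _ j]
    _ ≤ 1 / (Fintype.card ι : ℝ) ^ 2 * ∑ i : ι, ∑ j : ι, (a + if i = j then b else 0) := by
        gcongr with i _ j _
        exact hab i j
    _ = a + b / Fintype.card ι := by
        simp only [Finset.sum_add_distrib, Finset.sum_ite_eq, Finset.mem_univ, if_true,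
          Finset.sum_const, Finset.card_univ, nsmul_eq_mul]
        field_simp

end SecondMoment

theorem concentration_sum_squares_general {ι : Type} [Fintype ι] [Nonempty ι] {k : ℕ} {η : ℝ}
    {μ : Measure (ι → ℝ)} [IsProbabilityMeasure μ] (hμ : MomentMatches k η μ) (hk : 4 ≤ k)
    {ε : ℝ} (hε : 0 < ε) :
    μ {x | ε < |1 / (Fintype.card ι : ℝ) * ∑ j, x j ^ 2 - 1|} ≤
      ENNReal.ofReal ((3 * η + 2 / Fintype.card ι) / ε ^ 2) := by
  classical
  have average_sub_one (x : ι → ℝ) : 1 / (Fintype.card ι : ℝ) * ∑ j, x j ^ 2 - 1 =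
      1 / (Fintype.card ι : ℝ) * ∑ j, (x j ^ 2 - 1) := by
    simp [mul_sub]
  have products_integrable := hμ.integrable_sq_sub_one_mul_sq_sub_one hk
  simp only [average_sub_one]
  refine (measure_lt_abs_le_integral_sq_div (integrable_sq_average products_integrable) hε).trans ?_
  gcongr
  exact integral_sq_average_le products_integrable (hμ.integral_sq_sub_one_mul_sq_sub_one_le hk)

theorem concentration_sum_squares (d N : ℕ) (hd : 1 ≤ d) (hN : 1 ≤ N)
    (δ' ηh : ℝ) (hδ' : δ' ∈ Set.Ioo (0 : ℝ) 1) (hη0 : 0 ≤ ηh)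
    (hη : ηh ≤ (δ' ^ (2 * d + 3) / d - 2 / N) / 3)
    (μ : Measure (Fin N → ℝ)) [IsProbabilityMeasure μ]
    (hμ : MomentMatches 4 ηh μ) :
    μ {x | δ' ^ (d + 1) < |(1 / (N : ℝ)) * ∑ j, (x j) ^ 2 - 1|} ≤
      ENNReal.ofReal (δ' / d) := by
  have : NeZero N := ⟨by lia⟩
  have hε : 0 < δ' ^ (d + 1) := pow_pos hδ'.1 _
  have hsplit : δ' ^ (2 * d + 3) / d = δ' / d * (δ' ^ (d + 1)) ^ 2 := by ring
  have htail := concentration_sum_squares_general hμ le_rfl hε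
  rw [Fintype.card_fin] at htail
  exact htail.trans (ENNReal.ofReal_le_ofReal ((div_le_iff₀ (by positivity)).2 (by linarith)))
end

section
/- For every integer d ≥ 1 there exists a constant A ≥ 1 depending only on d with the following property. Let δ ∈ (0,1), n ≥ 1, let k be an integer with k ≥ A, and let η > 0 satisfy η ≤ δ^A·n^{-A}·k^{-k}. Let μ be a probability measure on ℝ^n that approximately matches the moments of the standard Gaussian up to degree k with slack η, and let p be a polynomial in n real variables of total degree at most d whose sum of squares of coefficients equals 1. Then there exist an integer N ≥ 1 and a multilinear polynomial p̂ in n·N real variables of total degree at most d such that, with ν_N the pushforward of γ_N under g ↦ (g_j − (1/N)·Σ_{j'} g_{j'})_j and T : ℝ^n × (ℝ^N)^n → ℝ^{n×N} defined by T(x,z)_{(i,j)} = x_i/√N + (z_i)_j, one has (μ ⊗ ν_N^{⊗n})({(x,z) : |p(x) − p̂(T(x,z))| > δ}) < δ and (γₙ ⊗ ν_N^{⊗n})({(y,z) : |p(y) − p̂(T(y,z))| > δ}) < δ. -/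
open MeasureTheory ProbabilityTheory

/-!
Newton's identities determine the elementary symmetric polynomials of an array from its power sums
`p₁, p₂, p₃, …`. If these tend to `x, 1, 0, 0, …`, Newton's recurrence becomes the three-term
recurrence of the Hermite polynomials, so the `c`-th elementary symmetric polynomial tends to
`He_c(x) / c!`. It is multilinear in the array, and every power of `x` is a combination of Hermite
polynomials, so multilinear polynomials in the array approximate every polynomial in `x`.

By the strong law of large numbers, the array `(x / √N + z_j) / √N` with `z ∼ ν_N` has such power
sums almost surely once all the `ν_N` are realized on one infinite sequence of standard Gaussians.
Almost sure convergence then gives convergence in measure for every finite law of `x`.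
-/

section Hermite

open Polynomial

theorem derivative_hermite (n : ℕ) :
    derivative (hermite n) = (n : ℤ[X]) * hermite (n - 1) := by
  induction n with
  | zero => simp
  | succ n ih =>
    cases n with
    | zero => simp
    | succ n =>
      calc derivative (hermite (n + 2))
          = hermite (n + 1) + X * derivative (hermite (n + 1)) -
              derivative (derivative (hermite (n + 1))) := by
            rw [hermite_succ (n + 1)]
            simp only [derivative_sub, derivative_mul, derivative_X, one_mul]
        _ = hermite (n + 1) + (n + 1 : ℤ[X]) * (X * hermite n - derivative (hermite n)) := by
            simp only [ih, derivative_mul, derivative_natCast, Nat.add_sub_cancel]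
            push_cast
            ring
        _ = ((n + 2 : ℕ) : ℤ[X]) * hermite (n + 1) := by
            rw [← hermite_succ]
            push_cast
            ring

theorem hermite_succ_eq_X_mul_sub (n : ℕ) :
    hermite (n + 1) = X * hermite n - (n : ℤ[X]) * hermite (n - 1) := by
  rw [hermite_succ, derivative_hermite]

theorem aeval_hermite_succ {K : Type*} [CommRing K] (x : K) (n : ℕ) :
    aeval x (hermite (n + 1)) = x * aeval x (hermite n) - n * aeval x (hermite (n - 1)) := by
  simp [-hermite_succ, hermite_succ_eq_X_mul_sub]

end Hermite

open Filter Topology Finset MvPolynomial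
open Polynomial (hermite)
open scoped Nat

section SymmetricPolynomials

variable {σ R : Type*} [Fintype σ]

theorem succ_mul_esymm_succ [CommRing R] (k : ℕ) :
    (k + 1) * esymm σ R (k + 1) =
      ∑ a ∈ antidiagonal k, (-1) ^ a.2 * esymm σ R a.1 * psum σ R (a.2 + 1) := by
  have newton := mul_esymm_eq_sum σ R (k + 1)
  rw [sum_filter, Nat.sum_antidiagonal_succ', if_neg (lt_irrefl _), zero_add, mul_sum] at newton
  rw [← Nat.cast_succ, newton]
  refine sum_congr rfl fun a ha => ?_
  obtain rfl : a.1 + a.2 = k := mem_antidiagonal.1 ha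
  have sign : (-1 : MvPolynomial σ R) ^ (a.1 + a.2 + 1 + 1) * (-1) ^ a.1 = (-1) ^ a.2 := by
    rw [← pow_add]
    exact neg_one_pow_congr (by grind)
  rw [if_pos (by lia), ← sign]
  ring

variable [CommSemiring R]

theorem eval_const_mul_esymm (r : R) (y : σ → R) (c : ℕ) :
    eval (fun j => r * y j) (esymm σ R c) = r ^ c * eval y (esymm σ R c) := by
  simp only [esymm, map_sum, map_prod, eval_X, mul_sum, prod_mul_distrib, prod_const]
  exact sum_congr rfl fun t ht => by rw [(mem_powersetCard.1 ht).2]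

theorem esymm_mem_restrictDegree_one (c : ℕ) : esymm σ R c ∈ restrictDegree σ R 1 := by
  classical
  nontriviality R
  rw [mem_restrictDegree, support_esymm, forall_mem_image]
  intro t _ j
  rw [Finsupp.finsetSum_apply]
  simp only [Finsupp.single_apply, sum_ite_eq']
  split_ifs <;> simp

theorem esymm_mem_restrictTotalDegree (c : ℕ) : esymm σ R c ∈ restrictTotalDegree σ R c := by
  classical
  nontriviality R
  rw [mem_restrictTotalDegree]
  refine totalDegree_finsetSum_le fun t ht => (totalDegree_finsetProd _ _).trans ?_
  simp [(mem_powersetCard.1 ht).2]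

end SymmetricPolynomials

section DisjointVariables

variable {ι σ R : Type*} [CommSemiring R]

theorem degreeOf_rename_prodMk_of_ne {i i' : ι} (h : i' ≠ i) (j : σ) (q : MvPolynomial σ R) :
    (rename (Prod.mk i') q).degreeOf (i, j) = 0 := by
  classical
  rw [degreeOf_def, Multiset.count_eq_zero]
  intro hmem
  have := Multiset.mem_of_subset (degrees_rename _ q) hmem
  obtain ⟨_, _, heq⟩ := Multiset.mem_map.1 this
  exact h (congrArg Prod.fst heq)

theorem prod_rename_prodMk_mem_restrictDegree {k : ℕ} (t : Finset ι) {q : ι → MvPolynomial σ R}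
    (hq : ∀ i ∈ t, q i ∈ restrictDegree σ R k) :
    ∏ i ∈ t, rename (Prod.mk i) (q i) ∈ restrictDegree (ι × σ) R k := by
  simp only [mem_restrictDegree] at hq ⊢
  rintro s hs ⟨i, j⟩
  refine degreeOf_le_iff.1 ((degreeOf_prod_le _ _ _).trans ?_) s hs
  by_cases hi : i ∈ t
  · rw [sum_eq_single_of_mem i hi fun i' _ hne => degreeOf_rename_prodMk_of_ne hne j _,
      degreeOf_rename_of_injective (Prod.mk_right_injective i)]
    exact degreeOf_le_iff.2 fun s hs => hq i hi s hs j
  · rw [sum_eq_zero fun i' hi' =>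
      degreeOf_rename_prodMk_of_ne (ne_of_mem_of_not_mem hi' hi) j _]
    exact zero_le

theorem prod_rename_prodMk_mem_restrictTotalDegree (t : Finset ι) {d : ι → ℕ}
    {q : ι → MvPolynomial σ R} (hq : ∀ i ∈ t, q i ∈ restrictTotalDegree σ R (d i)) :
    ∏ i ∈ t, rename (Prod.mk i) (q i) ∈ restrictTotalDegree (ι × σ) R (∑ i ∈ t, d i) := by
  simp only [mem_restrictTotalDegree] at hq ⊢
  exact (totalDegree_finsetProd _ _).trans
    (sum_le_sum fun i hi => (totalDegree_rename_le _ _).trans (hq i hi))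

end DisjointVariables

section HermiteLimit

/-- The limits `x, 1, 0, 0, …` of the power sums `p₁, p₂, p₃, …` for which Newton's identities
produce Hermite polynomials. Index `i` stands for `p_{i+1}`. -/
def hermitePowerSum {R : Type*} [Zero R] [One R] (x : R) : ℕ → R
  | 0 => x
  | 1 => 1
  | _ + 2 => 0

/-- The power sums of the arrays `Y a` tend to `x, 1, 0, 0, …` along `l`. -/
def HasHermitePowerSums {α R : Type*} {σ : α → Type*} [∀ a, Fintype (σ a)] [Semiring R]
    [TopologicalSpace R] (l : Filter α) (Y : ∀ a, σ a → R) (x : R) : Prop :=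
  ∀ i, Tendsto (fun a => ∑ j, Y a j ^ (i + 1)) l (𝓝 (hermitePowerSum x i))

theorem sum_antidiagonal_succ_mul_hermitePowerSum {R : Type*} [CommRing R] (f : ℕ → R) (x : R)
    (k : ℕ) :
    ∑ a ∈ antidiagonal (k + 1), (-1) ^ a.2 * f a.1 * hermitePowerSum x a.2 =
      x * f (k + 1) - f k := by
  cases k with
  | zero =>
    simp only [Nat.sum_antidiagonal_succ', HasAntidiagonal.antidiagonal_zero, sum_singleton,
      hermitePowerSum]
    ring
  | succ k =>
    simp only [Nat.sum_antidiagonal_succ', hermitePowerSum, mul_zero, sum_const_zero]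
    ring

variable {K : Type*} [Field K] [CharZero K]

theorem succ_mul_hermite_div_factorial (x : K) (k : ℕ) :
    (k + 1) * (Polynomial.aeval x (hermite (k + 1)) / (k + 1)!) =
      ∑ a ∈ antidiagonal k, (-1) ^ a.2 * (Polynomial.aeval x (hermite a.1) / a.1 !) *
        hermitePowerSum x a.2 := by
  cases k with
  | zero => simp [hermitePowerSum]
  | succ k =>
    have factorial_ne : (k ! : K) ≠ 0 := Nat.cast_ne_zero.2 k.factorial_ne_zero
    have succ_ne : (k + 1 : K) ≠ 0 := Nat.cast_add_one_ne_zero k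
    have succ_succ_ne : (k + 1 + 1 : K) ≠ 0 := mod_cast Nat.cast_add_one_ne_zero (R := K) (k + 1)
    rw [sum_antidiagonal_succ_mul_hermitePowerSum
      (fun c => Polynomial.aeval x (hermite c) / c !), aeval_hermite_succ]
    simp only [Nat.add_sub_cancel, Nat.factorial_succ, Nat.cast_mul, Nat.cast_succ]
    field_simp

variable [TopologicalSpace K] [IsTopologicalRing K] {α : Type*} {l : Filter α} {σ : α → Type*}
  [∀ a, Fintype (σ a)]

theorem tendsto_esymm_of_tendsto_psum {Y : ∀ a, σ a → K} {P E : ℕ → K}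
    (hP : ∀ i, Tendsto (fun a => ∑ j, Y a j ^ (i + 1)) l (𝓝 (P i))) (hE_zero : E 0 = 1)
    (hE_succ : ∀ k : ℕ, (k + 1) * E (k + 1) =
      ∑ a ∈ antidiagonal k, (-1) ^ a.2 * E a.1 * P a.2) (c : ℕ) :
    Tendsto (fun a => eval (Y a) (esymm (σ a) K c)) l (𝓝 (E c)) := by
  induction c using Nat.strong_induction_on with
  | _ c ih =>
    cases c with
    | zero => simpa [hE_zero] using tendsto_const_nhds
    | succ k =>
      have hk : (k + 1 : K) ≠ 0 := Nat.cast_add_one_ne_zero k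
      have newton (a : α) : eval (Y a) (esymm (σ a) K (k + 1)) =
          (k + 1 : K)⁻¹ * ∑ b ∈ antidiagonal k,
            (-1) ^ b.2 * eval (Y a) (esymm (σ a) K b.1) * ∑ j, Y a j ^ (b.2 + 1) := by
        rw [eq_inv_mul_iff_mul_eq₀ hk]
        simpa [psum] using congrArg (eval (Y a)) (succ_mul_esymm_succ (σ := σ a) (R := K) k)
      simp only [newton]
      rw [(eq_inv_mul_iff_mul_eq₀ hk).2 (hE_succ k)]
      refine (tendsto_finsetSum _ fun b hb => ?_).const_mul _
      exact ((ih b.1 (Nat.antidiagonal.fst_lt hb)).const_mul _).mul (hP b.2)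

theorem HasHermitePowerSums.tendsto_esymm {Y : ∀ a, σ a → K} {x : K}
    (hY : HasHermitePowerSums l Y x) (c : ℕ) :
    Tendsto (fun a => eval (Y a) (esymm (σ a) K c)) l
      (𝓝 (Polynomial.aeval x (hermite c) / c !)) :=
  tendsto_esymm_of_tendsto_psum
    (E := fun c => Polynomial.aeval x (hermite c) / c !) hY (by simp)
    (succ_mul_hermite_div_factorial x) c

end HermiteLimit

section Approximant

/-- A multilinear approximant of `x ^ b * He_c(x)`, to be evaluated at an array `Y` for which the
power sums of `r • Y` are close to `x, 1, 0, 0, …`. The recursion in `b` is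
`x * He_c = He_{c+1} + c * He_{c-1}`, whose last coefficient vanishes when `c - 1` is truncated. -/
noncomputable def powMulHermiteApproximant (σ : Type*) [Fintype σ] {R : Type*} [CommSemiring R]
    (r : R) : ℕ → ℕ → MvPolynomial σ R
  | 0, c => (c ! * r ^ c : R) • esymm σ R c
  | b + 1, c => powMulHermiteApproximant σ r b (c + 1) +
      (c : R) • powMulHermiteApproximant σ r b (c - 1)

/-- The multilinear polynomial obtained from `p` by replacing each power `x_i ^ b` in each monomial
by its approximant in the `i`-th block of variables. -/
noncomputable def multilinearApproximant {ι : Type*} (σ : Type*) [Fintype σ] {R : Type*}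
    [CommSemiring R] (r : R) (p : MvPolynomial ι R) : MvPolynomial (ι × σ) R :=
  ∑ m ∈ p.support, p.coeff m •
    ∏ i ∈ m.support, rename (Prod.mk i) (powMulHermiteApproximant σ r (m i) 0)

section Degree

variable {ι σ R : Type*} [Fintype σ] [CommSemiring R] (r : R)

theorem powMulHermiteApproximant_mem_restrictDegree_one (b c : ℕ) :
    powMulHermiteApproximant σ r b c ∈ restrictDegree σ R 1 := by
  induction b generalizing c with
  | zero => exact Submodule.smul_mem _ _ (esymm_mem_restrictDegree_one c)
  | succ b ih => exact add_mem (ih _) (Submodule.smul_mem _ _ (ih _))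

theorem powMulHermiteApproximant_mem_restrictTotalDegree (b c : ℕ) :
    powMulHermiteApproximant σ r b c ∈ restrictTotalDegree σ R (b + c) := by
  induction b generalizing c with
  | zero =>
    rw [zero_add]
    exact Submodule.smul_mem _ _ (esymm_mem_restrictTotalDegree c)
  | succ b ih =>
    refine add_mem ?_ (Submodule.smul_mem _ _ ?_)
    · exact (Nat.succ_add_eq_add_succ b c).symm ▸ ih (c + 1)
    · have := ih (c - 1)
      rw [mem_restrictTotalDegree] at this ⊢
      lia

theorem multilinearApproximant_mem_restrictDegree_one (p : MvPolynomial ι R) :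
    multilinearApproximant σ r p ∈ restrictDegree (ι × σ) R 1 :=
  sum_mem fun m _ => Submodule.smul_mem _ _ <|
    prod_rename_prodMk_mem_restrictDegree m.support fun i _ =>
      powMulHermiteApproximant_mem_restrictDegree_one r (m i) 0

theorem totalDegree_multilinearApproximant_le (p : MvPolynomial ι R) :
    (multilinearApproximant σ r p).totalDegree ≤ p.totalDegree := by
  refine totalDegree_finsetSum_le fun m hm => (totalDegree_smul_le _ _).trans ?_
  have := prod_rename_prodMk_mem_restrictTotalDegree m.support fun i _ =>
    powMulHermiteApproximant_mem_restrictTotalDegree (σ := σ) r (m i) 0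
  exact ((mem_restrictTotalDegree _ _ _).1 this).trans (le_totalDegree hm)

end Degree

variable {α : Type*} {l : Filter α} {σ : α → Type*} [∀ a, Fintype (σ a)]
  {K : Type*} [Field K] [TopologicalSpace K] [IsTopologicalRing K] [CharZero K]

theorem tendsto_eval_powMulHermiteApproximant {r : α → K} {Y : ∀ a, σ a → K} {x : K}
    (hY : HasHermitePowerSums l (fun a j => r a * Y a j) x) (b c : ℕ) :
    Tendsto (fun a => eval (Y a) (powMulHermiteApproximant (σ a) (r a) b c)) l
      (𝓝 (x ^ b * Polynomial.aeval x (hermite c))) := by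
  induction b generalizing c with
  | zero =>
    have hfac : (c ! : K) ≠ 0 := Nat.cast_ne_zero.2 c.factorial_ne_zero
    have := (hY.tendsto_esymm c).const_mul (c ! : K)
    simpa only [powMulHermiteApproximant, smul_eval, eval_const_mul_esymm, mul_assoc,
      mul_div_cancel₀ _ hfac, pow_zero, one_mul] using this
  | succ b ih =>
    have recurrence : x ^ (b + 1) * Polynomial.aeval x (hermite c) =
        x ^ b * Polynomial.aeval x (hermite (c + 1)) +
          c * (x ^ b * Polynomial.aeval x (hermite (c - 1))) := by
      rw [aeval_hermite_succ]
      ring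
    simpa only [powMulHermiteApproximant, map_add, smul_eval, recurrence] using
      (ih (c + 1)).add ((ih (c - 1)).const_mul (c : K))

theorem tendsto_eval_multilinearApproximant {ι : Type*} {r : α → K} {Y : ∀ a, ι × σ a → K}
    {x : ι → K} (hY : ∀ i, HasHermitePowerSums l (fun a j => r a * Y a (i, j)) (x i))
    (p : MvPolynomial ι K) :
    Tendsto (fun a => eval (Y a) (multilinearApproximant (σ a) (r a) p)) l (𝓝 (eval x p)) := by
  simp only [multilinearApproximant, map_sum, smul_eval, map_prod, eval_rename]
  rw [eval_eq]
  refine tendsto_finsetSum _ fun m _ => (tendsto_finsetProd _ fun i _ => ?_).const_mul _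
  simpa [Function.comp_def] using tendsto_eval_powMulHermiteApproximant (hY i) (m i) 0

end Approximant

section Averages

variable {ω m : ℕ → ℝ}

theorem tendsto_average_add_pow {a : ℕ → ℝ}
    (hω : ∀ i, Tendsto (fun N : ℕ => (∑ j : Fin N, ω j ^ i) / N) atTop (𝓝 (m i)))
    (ha : Tendsto a atTop (𝓝 0)) (i : ℕ) :
    Tendsto (fun N : ℕ => (∑ j : Fin N, (a N + ω j) ^ i) / N) atTop (𝓝 (m i)) := by
  have binomial (N : ℕ) : (∑ j : Fin N, (a N + ω j) ^ i) / N =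
      ∑ k ∈ range (i + 1), a N ^ k * ((∑ j : Fin N, ω j ^ (i - k)) / N) * i.choose k := by
    simp only [add_pow]
    rw [sum_comm, sum_div]
    refine sum_congr rfl fun k _ => ?_
    rw [← sum_mul, ← mul_sum]
    ring
  have limit : m i = ∑ k ∈ range (i + 1), 0 ^ k * m (i - k) * i.choose k := by
    simp [sum_range_succ']
  simp only [binomial]
  rw [limit]
  exact tendsto_finsetSum _ fun k _ => ((ha.pow k).mul (hω (i - k))).mul_const _

/-- Subtraction of the mean, the map whose pushforward of the standard Gaussian is `nuN N`. -/
noncomputable def centering (N : ℕ) (g : Fin N → ℝ) (j : Fin N) : ℝ :=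
  g j - (1 / (N : ℝ)) * ∑ j', g j'

theorem measurable_centering (N : ℕ) : Measurable (centering N) := by
  unfold centering
  fun_prop

theorem sum_centering (N : ℕ) (g : Fin N → ℝ) : ∑ j, centering N g j = 0 := by
  rcases N.eq_zero_or_pos with rfl | hN
  · simp
  · simp only [centering, sum_sub_distrib, sum_const, card_univ, Fintype.card_fin, nsmul_eq_mul]
    field_simp
    ring

theorem sum_inv_sqrt_mul_div_sqrt_add {N : ℕ} (hN : N ≠ 0) {z : Fin N → ℝ} (hz : ∑ j, z j = 0)
    (x : ℝ) : ∑ j, (√N)⁻¹ * (x / √N + z j) = x := by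
  rw [← mul_sum, sum_add_distrib, hz, sum_const, card_univ, Fintype.card_fin, nsmul_eq_mul]
  field_simp
  rw [Real.sq_sqrt N.cast_nonneg]
  ring

theorem tendsto_sqrt_natCast_atTop : Tendsto (fun N : ℕ => √(N : ℝ)) atTop atTop :=
  Real.tendsto_sqrt_atTop.comp tendsto_natCast_atTop_atTop

theorem hasHermitePowerSums_centering (hm_one : m 1 = 0) (hm_two : m 2 = 1)
    (hω : ∀ i, Tendsto (fun N : ℕ => (∑ j : Fin N, ω j ^ i) / N) atTop (𝓝 (m i))) (x : ℝ) :
    HasHermitePowerSums atTop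
      (fun (N : ℕ) j => (√N)⁻¹ * (x / √N + centering N (fun j => ω j) j)) x := by
  let a (N : ℕ) : ℝ := x / √N - (∑ j : Fin N, ω j) / N
  have ha : Tendsto a atTop (𝓝 0) := by
    simpa [hm_one] using
      (tendsto_const_nhds (x := x)).div_atTop tendsto_sqrt_natCast_atTop |>.sub (hω 1)
  have power_sum (N i : ℕ) :
      ∑ j : Fin N, ((√N)⁻¹ * (x / √N + centering N (fun j => ω j) j)) ^ (i + 2) =
        ((√N)⁻¹) ^ i * ((∑ j : Fin N, (a N + ω j) ^ (i + 2)) / N) := by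
    rw [sum_div, mul_sum]
    refine sum_congr rfl fun j _ => ?_
    have : x / √N + centering N (fun j => ω j) j = a N + ω j := by
      simp only [a, centering]
      ring
    rw [this, mul_pow, pow_add _ i 2, inv_pow _ 2, Real.sq_sqrt (Nat.cast_nonneg N)]
    ring
  intro i
  match i with
  | 0 =>
    refine tendsto_const_nhds.congr' ?_
    filter_upwards [eventually_gt_atTop 0] with N hN
    simpa only [hermitePowerSum, zero_add, pow_one] using
      (sum_inv_sqrt_mul_div_sqrt_add hN.ne' (sum_centering N fun j => ω j) x).symm
  | 1 =>
    simpa [power_sum _ 0, hermitePowerSum, hm_two] using tendsto_average_add_pow hω ha 2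
  | i + 2 =>
    have vanish : Tendsto (fun N : ℕ => ((√N)⁻¹) ^ (i + 1)) atTop (𝓝 0) := by
      simpa using (tendsto_inv_atTop_zero.comp tendsto_sqrt_natCast_atTop).pow (i + 1)
    simpa [power_sum _ (i + 1), hermitePowerSum] using
      vanish.mul (tendsto_average_add_pow hω ha (i + 3))

end Averages

section LawOfLargeNumbers

theorem ae_tendsto_average_infinitePi {E : Type*} [MeasurableSpace E] {ρ : Measure E}
    [IsProbabilityMeasure ρ] {f : E → ℝ} (hf : Measurable f) (hfi : Integrable f ρ) :
    ∀ᵐ ω ∂Measure.infinitePi fun _ : ℕ => ρ,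
      Tendsto (fun N : ℕ => (∑ j : Fin N, f (ω j)) / N) atTop (𝓝 (∫ y, f y ∂ρ)) := by
  have eval_mp (i : ℕ) := measurePreserving_eval_infinitePi (fun _ : ℕ => ρ) i
  have identDistrib (i : ℕ) :
      IdentDistrib (fun ω : ℕ → E => f (ω i)) f (Measure.infinitePi fun _ : ℕ => ρ) ρ :=
    ⟨(hf.comp (measurable_pi_apply i)).aemeasurable, hf.aemeasurable,
      ((hf.measurePreserving ρ).comp (eval_mp i)).map_eq⟩
  have slln := strong_law_ae_real (fun i (ω : ℕ → E) => f (ω i))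
    ((identDistrib 0).integrable_iff.2 hfi)
    (fun i j hij => (iIndepFun_infinitePi (P := fun _ : ℕ => ρ) fun _ => hf).indepFun hij)
    fun i => (identDistrib i).trans (identDistrib 0).symm
  filter_upwards [slln] with ω hω
  simpa only [sum_range, (identDistrib 0).integral_eq] using hω

theorem ae_hasHermitePowerSums_centering {ρ : Measure ℝ} [IsProbabilityMeasure ρ]
    (hmean : ∫ y, y ∂ρ = 0) (hsq : ∫ y, y ^ 2 ∂ρ = 1)
    (hint : ∀ i : ℕ, Integrable (fun y => y ^ i) ρ) :
    ∀ᵐ ω ∂Measure.infinitePi fun _ : ℕ => ρ, ∀ x : ℝ, HasHermitePowerSums atTop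
      (fun (N : ℕ) j => (√N)⁻¹ * (x / √N + centering N (fun j => ω j) j)) x := by
  have moments := ae_all_iff.2 fun i =>
    ae_tendsto_average_infinitePi (measurable_id.pow_const i) (hint i)
  filter_upwards [moments] with ω hω
  exact hasHermitePowerSums_centering (by simpa using hmean) hsq hω

end LawOfLargeNumbers

section Gaussian

theorem integrable_pow_gaussianReal (μ : ℝ) (v : NNReal) (i : ℕ) :
    Integrable (fun y => y ^ i) (gaussianReal μ v) := by
  have norm_pow := (memLp_id_gaussianReal' (μ := μ) (v := v) i (by simp)).integrable_norm_pow'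
  refine (integrable_norm_iff (by fun_prop)).1 ?_
  simpa using norm_pow

theorem integral_sq_gaussianReal_zero_left (v : NNReal) : ∫ y, y ^ 2 ∂gaussianReal 0 v = v := by
  have variance_id := variance_id_gaussianReal (μ := 0) (v := v)
  rwa [variance_of_integral_eq_zero (by fun_prop) (by simp)] at variance_id

instance (ι : Type) [Fintype ι] : IsProbabilityMeasure (stdGaussianPi ι) := by
  unfold stdGaussianPi
  infer_instance

/-- The law of an infinite sequence of independent standard Gaussians, on which all `nuN N` are
realized simultaneously. -/
noncomputable def gaussianSeq : Measure (ℕ → ℝ) :=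
  Measure.infinitePi fun _ => gaussianReal 0 1

instance : IsProbabilityMeasure gaussianSeq := by
  unfold gaussianSeq
  infer_instance

theorem ae_hasHermitePowerSums_gaussianSeq :
    ∀ᵐ ω ∂gaussianSeq, ∀ x : ℝ, HasHermitePowerSums atTop
      (fun (N : ℕ) j => (√N)⁻¹ * (x / √N + centering N (fun j => ω j) j)) x :=
  ae_hasHermitePowerSums_centering integral_id_gaussianReal
    (integral_sq_gaussianReal_zero_left 1) (integrable_pow_gaussianReal 0 1)

theorem measurePreserving_restrict_gaussianSeq (N : ℕ) :
    MeasurePreserving (fun (ω : ℕ → ℝ) (j : Fin N) => ω j) gaussianSeq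
      (stdGaussianPi (Fin N)) where
  measurable := by fun_prop
  map_eq := by
    rw [gaussianSeq, Measure.map_infinitePi_infinitePi_of_inj (P := fun _ : ℕ => gaussianReal 0 1)
      Fin.val_injective, Measure.infinitePi_eq_pi, stdGaussianPi]

theorem measurePreserving_centering_gaussianSeq (N : ℕ) :
    MeasurePreserving (fun ω : ℕ → ℝ => centering N fun j => ω j) gaussianSeq (nuN N) :=
  ((measurable_centering N).measurePreserving _).comp (measurePreserving_restrict_gaussianSeq N)

instance (N : ℕ) : IsProbabilityMeasure (nuN N) :=
  Measure.isProbabilityMeasure_map (measurable_centering N).aemeasurable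

end Gaussian

section Coupling

variable {ι : Type*}

/-- The map `T(x, z)_{(i,j)} = x_i / √N + (z_i)_j` of the statement. -/
noncomputable def blockShift {N : ℕ} (x : ι → ℝ) (z : ι → Fin N → ℝ)
    (ij : ι × Fin N) : ℝ :=
  x ij.1 / √N + z ij.1 ij.2

/-- Realizes the noise blocks `z_i ∼ nuN N`, for all `N` at once, from infinite Gaussian sequences
`w i`, leaving the point `x` unchanged. -/
noncomputable def coupling (N : ℕ) (q : (ι → ℝ) × (ι → ℕ → ℝ)) :
    (ι → ℝ) × (ι → Fin N → ℝ) :=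
  Prod.map id (fun w i => centering N fun j => w i j) q

theorem measurable_eval_blockShift [Countable ι] {N : ℕ} (p : MvPolynomial (ι × Fin N) ℝ) :
    Measurable fun q : (ι → ℝ) × (ι → Fin N → ℝ) => eval (blockShift q.1 q.2) p := by
  have blockShift_meas : Measurable fun q : (ι → ℝ) × (ι → Fin N → ℝ) => blockShift q.1 q.2 := by
    unfold blockShift
    fun_prop
  exact (continuous_eval p).measurable.comp blockShift_meas

variable [Fintype ι]

theorem measurePreserving_coupling (μ : Measure (ι → ℝ)) [SFinite μ] (N : ℕ) :
    MeasurePreserving (coupling N) (μ.prod (Measure.pi fun _ : ι => gaussianSeq))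
      (μ.prod (Measure.pi fun _ : ι => nuN N)) :=
  (MeasurePreserving.id μ).prod
    (measurePreserving_pi _ _ fun _ => measurePreserving_centering_gaussianSeq N)

theorem ae_tendsto_eval_multilinearApproximant (μ : Measure (ι → ℝ)) [SFinite μ]
    (p : MvPolynomial ι ℝ) :
    ∀ᵐ q ∂μ.prod (Measure.pi fun _ : ι => gaussianSeq),
      Tendsto (fun N : ℕ => eval (blockShift (coupling N q).1 (coupling N q).2)
        (multilinearApproximant (Fin N) (√N)⁻¹ p)) atTop (𝓝 (eval q.1 p)) := by
  have rows : ∀ᵐ w ∂Measure.pi fun _ : ι => gaussianSeq, ∀ i x, HasHermitePowerSums atTop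
      (fun (N : ℕ) j => (√N)⁻¹ * (x / √N + centering N (fun j => w i j) j)) x :=
    ae_all_iff.2 fun i =>
      (measurePreserving_eval (fun _ : ι => gaussianSeq) i).quasiMeasurePreserving.ae
        ae_hasHermitePowerSums_gaussianSeq
  filter_upwards [Measure.quasiMeasurePreserving_snd.ae rows] with q hq
  exact tendsto_eval_multilinearApproximant (r := fun N : ℕ => (√N)⁻¹)
    (Y := fun N => blockShift (coupling N q).1 (coupling N q).2) (fun i => hq i (q.1 i)) p

theorem tendsto_measure_lt_abs_eval_sub_multilinearApproximant (μ : Measure (ι → ℝ))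
    [IsFiniteMeasure μ] (p : MvPolynomial ι ℝ) {δ : ℝ} (hδ : 0 < δ) :
    Tendsto (fun N : ℕ => μ.prod (Measure.pi fun _ : ι => nuN N)
        {q | δ < |eval q.1 p -
          eval (blockShift q.1 q.2) (multilinearApproximant (Fin N) (√N)⁻¹ p)|})
      atTop (𝓝 0) := by
  have inMeasure := tendstoInMeasure_of_tendsto_ae
    (fun N => ((measurable_eval_blockShift _).comp
      (measurePreserving_coupling μ N).measurable).aestronglyMeasurable)
    (ae_tendsto_eval_multilinearApproximant μ p)
  refine tendsto_of_tendsto_of_tendsto_of_le_of_le tendsto_const_nhds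
    (inMeasure (ENNReal.ofReal δ) (by simpa)) (fun _ => zero_le) fun N => ?_
  have deviation_meas := measurableSet_lt (measurable_const (a := δ))
    (((continuous_eval p).measurable.comp measurable_fst).sub
      (measurable_eval_blockShift (multilinearApproximant (Fin N) (√N)⁻¹ p))).abs
  refine ((measurePreserving_coupling μ N).measure_preimage
    deviation_meas.nullMeasurableSet).ge.trans (measure_mono fun q hq => ?_)
  rw [Set.mem_ofPred_eq, edist_dist, dist_comm, Real.dist_eq]
  exact ENNReal.ofReal_le_ofReal (le_of_lt hq)

theorem exists_multilinear_approximant_general {d : ℕ} {p : MvPolynomial ι ℝ}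
    (hp : p.totalDegree ≤ d) {δ : ℝ} (hδ : 0 < δ) (μ ν : Measure (ι → ℝ)) [IsFiniteMeasure μ]
    [IsFiniteMeasure ν] :
    ∃ N : ℕ, 1 ≤ N ∧ ∃ phat : MvPolynomial (ι × Fin N) ℝ,
      (∀ m ∈ phat.support, ∀ ij, m ij ≤ 1) ∧ phat.totalDegree ≤ d ∧
      μ.prod (Measure.pi fun _ : ι => nuN N)
        {q | δ < |eval q.1 p - eval (blockShift q.1 q.2) phat|} < ENNReal.ofReal δ ∧
      ν.prod (Measure.pi fun _ : ι => nuN N)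
        {q | δ < |eval q.1 p - eval (blockShift q.1 q.2) phat|} < ENNReal.ofReal δ := by
  have eventually_small (ρ : Measure (ι → ℝ)) [IsFiniteMeasure ρ] :=
    (tendsto_measure_lt_abs_eval_sub_multilinearApproximant ρ p hδ).eventually_lt_const
      (ENNReal.ofReal_pos.2 hδ)
  obtain ⟨N, hN, hμ, hν⟩ :=
    ((eventually_ge_atTop 1).and ((eventually_small μ).and (eventually_small ν))).exists
  exact ⟨N, hN, multilinearApproximant (Fin N) (√N)⁻¹ p,
    (mem_restrictDegree _ _ _).1 (multilinearApproximant_mem_restrictDegree_one _ p),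
    (totalDegree_multilinearApproximant_le _ p).trans hp, hμ, hν⟩

end Coupling

theorem exists_multilinear_approximant (d : ℕ) (hd : 1 ≤ d) :
    ∃ A : ℝ, 1 ≤ A ∧
      ∀ δ : ℝ, δ ∈ Set.Ioo (0 : ℝ) 1 →
      ∀ n : ℕ, 1 ≤ n →
      ∀ k : ℕ, A ≤ (k : ℝ) →
      ∀ η : ℝ, 0 < η →
        η ≤ δ ^ A * (n : ℝ) ^ (-A) * (k : ℝ) ^ (-(k : ℝ)) →
      ∀ μ : Measure (Fin n → ℝ), IsProbabilityMeasure μ →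
        MomentMatches k η μ →
      ∀ p : MvPolynomial (Fin n) ℝ, p.totalDegree ≤ d →
        (∑ m ∈ p.support, (p.coeff m) ^ 2 = 1) →
        ∃ N : ℕ, 1 ≤ N ∧
          ∃ phat : MvPolynomial (Fin n × Fin N) ℝ,
            (∀ m ∈ phat.support, ∀ ij, m ij ≤ 1) ∧
            phat.totalDegree ≤ d ∧
            (μ.prod (Measure.pi fun _ : Fin n => nuN N))
              {q : (Fin n → ℝ) × (Fin n → Fin N → ℝ) |
                δ < |MvPolynomial.eval q.1 p -
                  MvPolynomial.eval
                    (fun ij : Fin n × Fin N =>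
                      q.1 ij.1 / Real.sqrt N + q.2 ij.1 ij.2) phat|} <
              ENNReal.ofReal δ ∧
            ((stdGaussianPi (Fin n)).prod (Measure.pi fun _ : Fin n => nuN N))
              {q : (Fin n → ℝ) × (Fin n → Fin N → ℝ) |
                δ < |MvPolynomial.eval q.1 p -
                  MvPolynomial.eval
                    (fun ij : Fin n × Fin N =>
                      q.1 ij.1 / Real.sqrt N + q.2 ij.1 ij.2) phat|} <
              ENNReal.ofReal δ := by
  exact ⟨1, le_rfl, fun δ hδ n _ _ _ _ _ _ μ _ _ p hp _ =>
    exists_multilinear_approximant_general hp hδ.1 μ (stdGaussianPi (Fin n))⟩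
end
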